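/- arXiv:1509.06898 — 3 statements merged into one kernel-verified Lean document; each statement's English description precedes it below -/
import Mathlib

section
/- Let T be a finite tile set over a glue alphabet in which every glue has strength at most g, let c ≥ 1 be an integer, and let τ₁, τ₂, … be a sequence of nondecreasing temperature functions and k₁, k₂, … a sequence of pairwise distinct positive integers such that for each i the size-dependent system (T, τᵢ) has at least one terminal supertile and self-assembles a kᵢ × hᵢ rectangle for some integer hᵢ with 1 ≤ hᵢ ≤ c. Define f(n) = infᵢ τᵢ(n). Then f(n) ≤ (c + 1)·g for every n ≥ 1; in particular f(n) = O(1). -/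
/-!
The widths `k i` are pairwise distinct, so for given `n` some `k i` is at least `2 * n`. Take a
terminal supertile of that system; it is a `k i × h i` rectangle. The straight vertical cut after
column `n` splits it into two rectangles, each connected (`box_connected`) and of size at least
`n`, and crosses only `h i ≤ c` edges, so its strength is at most `c * g`
(`cutStrength_box_le`). A terminal supertile does not break, hence
`τ i n ≤ τ i (min …) ≤ c * g ≤ (c + 1) * g`.
-/

/-- A tile type over glue alphabet `G`: four glues on the north, east, south,
and west edges. -/
structure Tile (G : Type) where
  north : G
  east : G
  south : G
  west : G

/-- Grid adjacency: two points of `ℤ²` at Euclidean distance 1. -/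
def Adj (p q : ℤ × ℤ) : Prop :=
  (p.1 - q.1).natAbs + (p.2 - q.2).natAbs = 1

/-- A set of grid points is connected under grid adjacency. -/
def ConnectedIn (S : Set (ℤ × ℤ)) : Prop :=
  ∀ p ∈ S, ∀ q ∈ S,
    Relation.ReflTransGen (fun a b => Adj a b ∧ a ∈ S ∧ b ∈ S) p q

/-- An assembly over the tile set `T`: a finite partial function from `ℤ²` to
tiles of `T` whose domain is connected under grid adjacency. -/
structure Assembly (G : Type) (T : Set (Tile G)) where
  tiles : ℤ × ℤ → Option (Tile G)
  dom : Finset (ℤ × ℤ)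
  mem_dom : ∀ p, p ∈ dom ↔ (tiles p).isSome
  connected : ConnectedIn (↑dom : Set (ℤ × ℤ))
  tiles_mem : ∀ p t, tiles p = some t → t ∈ T

/-- Strength of the bond between two abutting glues: the glues bond iff they
are equal, in which case the bond strength is the glue strength. -/
noncomputable def glueBond {G : Type} (str : G → ℕ) (a b : G) : ℕ := by
  classical
  exact if a = b then str a else 0

/-- The strength of the bond between a tile `t` at position `p` and a tile `u`
at position `q` (0 unless `p` and `q` are adjacent and the abutting glues
match). -/
noncomputable def tileBond {G : Type} (str : G → ℕ) (t u : Tile G) (p q : ℤ × ℤ) : ℕ :=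
  if q = (p.1 + 1, p.2) then glueBond str t.east u.west
  else if q = (p.1 - 1, p.2) then glueBond str t.west u.east
  else if q = (p.1, p.2 + 1) then glueBond str t.north u.south
  else if q = (p.1, p.2 - 1) then glueBond str t.south u.north
  else 0

/-- The strength of the bond between the tiles of `α` at positions `p`, `q`. -/
noncomputable def posBond {G : Type} {T : Set (Tile G)} (str : G → ℕ)
    (α : Assembly G T) (p q : ℤ × ℤ) : ℕ :=
  match α.tiles p, α.tiles q with
  | some t, some u => tileBond str t u p q
  | _, _ => 0

/-- The strength of the cut of `α` into the parts `A` and `B`: the total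
strength of bonds between tiles in opposite parts. -/
noncomputable def cutStrength {G : Type} {T : Set (Tile G)} (str : G → ℕ)
    (α : Assembly G T) (A B : Finset (ℤ × ℤ)) : ℕ :=
  ∑ p ∈ A, ∑ q ∈ B, posBond str α p q

/-- An assembly is `τ`-stable if every cut of it into two nonempty parts of
sizes `a` and `b` has strength at least `τ (min a b)`. -/
def IsStable {G : Type} {T : Set (Tile G)} (str : G → ℕ) (τ : ℕ → ℕ)
    (α : Assembly G T) : Prop :=
  ∀ A B : Finset (ℤ × ℤ), Disjoint A B → A ∪ B = α.dom →
    A.Nonempty → B.Nonempty →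
    τ (min A.card B.card) ≤ cutStrength str α A B

/-- Two assemblies represent the same supertile iff one is a translate of the
other. -/
def SameSupertile {G : Type} {T : Set (Tile G)} (α β : Assembly G T) : Prop :=
  ∃ v : ℤ × ℤ, ∀ p : ℤ × ℤ, β.tiles (p + v) = α.tiles p

/-- `γ` is the union of the disjoint assemblies `α` and `β`. -/
def IsUnionOf {G : Type} {T : Set (Tile G)} (γ α β : Assembly G T) : Prop :=
  Disjoint α.dom β.dom ∧ γ.dom = α.dom ∪ β.dom ∧
    (∀ p ∈ α.dom, γ.tiles p = α.tiles p) ∧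
    (∀ p ∈ β.dom, γ.tiles p = β.tiles p)

/-- The supertiles of `α` and `β` combine into the supertile of `γ`: there are
disjoint representatives whose union is a representative of `γ` such that the
cut between them has strength at least `τ` of the size of the smaller part. -/
def CombinesTo {G : Type} {T : Set (Tile G)} (str : G → ℕ) (τ : ℕ → ℕ)
    (α β γ : Assembly G T) : Prop :=
  ∃ α' β' γ' : Assembly G T, SameSupertile α α' ∧ SameSupertile β β' ∧
    SameSupertile γ γ' ∧ IsUnionOf γ' α' β' ∧
    τ (min α'.dom.card β'.dom.card) ≤ cutStrength str γ' α'.dom β'.dom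

/-- The supertile of `γ` breaks into the supertiles of `α` and `β`: there are
disjoint representatives (each with connected domain, as all assemblies have)
whose union is a representative of `γ` such that the cut between them has
strength strictly less than `τ` of the size of the smaller part. -/
def BreaksTo {G : Type} {T : Set (Tile G)} (str : G → ℕ) (τ : ℕ → ℕ)
    (γ α β : Assembly G T) : Prop :=
  ∃ α' β' γ' : Assembly G T, SameSupertile α α' ∧ SameSupertile β β' ∧
    SameSupertile γ γ' ∧ IsUnionOf γ' α' β' ∧
    cutStrength str γ' α'.dom β'.dom < τ (min α'.dom.card β'.dom.card)

/-- The producible supertiles of the size-dependent system `(T, τ)`: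
supertiles of size 1, combinations of two producible supertiles, and
supertiles resulting from a break of a producible supertile. -/
inductive Producible {G : Type} (str : G → ℕ) (T : Set (Tile G)) (τ : ℕ → ℕ) :
    Assembly G T → Prop
  | single (α : Assembly G T) : α.dom.card = 1 → Producible str T τ α
  | combine (α β γ : Assembly G T) : Producible str T τ α →
      Producible str T τ β → CombinesTo str τ α β γ → Producible str T τ γ
  | breakLeft (γ α β : Assembly G T) : Producible str T τ γ →
      BreaksTo str τ γ α β → Producible str T τ α
  | breakRight (γ α β : Assembly G T) : Producible str T τ γ →
      BreaksTo str τ γ α β → Producible str T τ β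

/-- A producible supertile is terminal if it admits no combination with any
producible supertile and no break. -/
def Terminal {G : Type} (str : G → ℕ) (T : Set (Tile G)) (τ : ℕ → ℕ)
    (α : Assembly G T) : Prop :=
  Producible str T τ α ∧
    (∀ β γ : Assembly G T, Producible str T τ β →
      ¬ CombinesTo str τ α β γ ∧ ¬ CombinesTo str τ β α γ) ∧
    (∀ β γ : Assembly G T, ¬ BreaksTo str τ α β γ)

/-- The system `(T, τ)` self-assembles the shape `P` if every terminal
supertile consists of assemblies whose domain is a translate of `P`. -/
def SelfAssembles {G : Type} (str : G → ℕ) (T : Set (Tile G)) (τ : ℕ → ℕ)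
    (P : Set (ℤ × ℤ)) : Prop :=
  ∀ α : Assembly G T, Terminal str T τ α →
    ∃ v : ℤ × ℤ, (↑α.dom : Set (ℤ × ℤ)) = (· + v) '' P

/-- The `w × h` rectangle `{1,…,w} × {1,…,h}`. -/
def rect (w h : ℕ) : Set (ℤ × ℤ) :=
  {p | 1 ≤ p.1 ∧ p.1 ≤ (w : ℤ) ∧ 1 ≤ p.2 ∧ p.2 ≤ (h : ℤ)}

/-- The finite lattice rectangle `[a, b] × [c, d]`. -/
noncomputable def box (a b c d : ℤ) : Finset (ℤ × ℤ) := Finset.Icc a b ×ˢ Finset.Icc c d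

lemma mem_box {a b c d : ℤ} {p : ℤ × ℤ} :
    p ∈ box a b c d ↔ (a ≤ p.1 ∧ p.1 ≤ b) ∧ (c ≤ p.2 ∧ p.2 ≤ d) := by
  simp [box]

/-- Any two points of a box are joined inside it by a monotone lattice path. -/
lemma box_connected (a b c d : ℤ) : ConnectedIn (↑(box a b c d) : Set (ℤ × ℤ)) := by
  -- Induction on the `ℓ¹` distance, stepping `p` towards `q`.
  suffices H : ∀ N : ℕ, ∀ p ∈ box a b c d, ∀ q ∈ box a b c d,
      (p.1 - q.1).natAbs + (p.2 - q.2).natAbs = N →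
      Relation.ReflTransGen
        (fun x y => Adj x y ∧ x ∈ (↑(box a b c d) : Set (ℤ × ℤ)) ∧
          y ∈ (↑(box a b c d) : Set (ℤ × ℤ))) p q from
    fun p hp q hq => H _ p hp q hq rfl
  intro N
  induction N with
  | zero =>
    intro p _ q _ h
    have : p = q := by ext <;> omega
    rw [this]
  | succ N ih =>
    intro p hp q hq h
    have step : ∃ r ∈ box a b c d, Adj p r ∧
        (r.1 - q.1).natAbs + (r.2 - q.2).natAbs = N := by
      rw [mem_box] at hp hq
      rcases lt_trichotomy p.1 q.1 with h1 | h1 | h1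
      · exact ⟨(p.1 + 1, p.2), by rw [mem_box]; dsimp only; omega,
          by unfold Adj; dsimp only; omega, by dsimp only; omega⟩
      · rcases le_or_gt p.2 q.2 with h2 | h2
        · exact ⟨(p.1, p.2 + 1), by rw [mem_box]; dsimp only; omega,
            by unfold Adj; dsimp only; omega, by dsimp only; omega⟩
        · exact ⟨(p.1, p.2 - 1), by rw [mem_box]; dsimp only; omega,
            by unfold Adj; dsimp only; omega, by dsimp only; omega⟩
      · exact ⟨(p.1 - 1, p.2), by rw [mem_box]; dsimp only; omega,
          by unfold Adj; dsimp only; omega, by dsimp only; omega⟩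
    obtain ⟨r, hr, hadj, hd⟩ := step
    exact Relation.ReflTransGen.head ⟨hadj, hp, hr⟩ (ih r hr q hq hd)

/-- The restriction of an assembly to a connected part of its domain. -/
def Assembly.restrict {G : Type} {T : Set (Tile G)} (α : Assembly G T)
    (S : Finset (ℤ × ℤ)) (hS : S ⊆ α.dom) (hconn : ConnectedIn (↑S : Set (ℤ × ℤ))) :
    Assembly G T where
  tiles p := if p ∈ S then α.tiles p else none
  dom := S
  mem_dom p := by
    by_cases hp : p ∈ S
    · simpa [hp] using (α.mem_dom p).1 (hS hp)
    · simp [hp]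
  connected := hconn
  tiles_mem p t ht := by
    by_cases hp : p ∈ S
    · exact α.tiles_mem p t (by simpa [hp] using ht)
    · simp [hp] at ht

lemma SameSupertile.refl {G : Type} {T : Set (Tile G)} (α : Assembly G T) :
    SameSupertile α α := ⟨0, fun p => by simp⟩

/-- Across a vertical line, only the horizontal edges meeting that line carry bonds. -/
lemma posBond_across {G : Type} {T : Set (Tile G)} (str : G → ℕ) (g : ℕ)
    (hg : ∀ a : G, str a ≤ g) (α : Assembly G T) (m : ℤ) (p q : ℤ × ℤ)
    (hp : p.1 ≤ m) (hq : m < q.1) :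
    posBond str α p q ≤ if q = (p.1 + 1, p.2) then (if p.1 = m then g else 0) else 0 := by
  have hb : ∀ a b : G, glueBond str a b ≤ g := by
    intro a b
    unfold glueBond
    split_ifs
    · exact hg a
    · exact Nat.zero_le g
  unfold posBond
  split
  · unfold tileBond
    by_cases h1 : q = (p.1 + 1, p.2)
    · have hm : p.1 = m := by
        have : q.1 = p.1 + 1 := by rw [h1]
        omega
      rw [if_pos h1, if_pos h1, if_pos hm]
      exact hb _ _
    · have h2 : q ≠ (p.1 - 1, p.2) := fun e => by
        have : q.1 = p.1 - 1 := by rw [e]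
        omega
      have h3 : q ≠ (p.1, p.2 + 1) := fun e => by
        have : q.1 = p.1 := by rw [e]
        omega
      have h4 : q ≠ (p.1, p.2 - 1) := fun e => by
        have : q.1 = p.1 := by rw [e]
        omega
      simp [h1, h2, h3, h4]
  · exact Nat.zero_le _

/-- A straight vertical cut of a box of height `d - c + 1` crosses one edge per row. -/
lemma cutStrength_box_le {G : Type} {T : Set (Tile G)} (str : G → ℕ) (g : ℕ)
    (hg : ∀ a : G, str a ≤ g) (α : Assembly G T) (a m b c d : ℤ) :
    cutStrength str α (box a m c d) (box (m + 1) b c d) ≤ (d + 1 - c).toNat * g := by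
  unfold cutStrength
  calc _ ≤ ∑ p ∈ box a m c d, if p.1 = m then g else 0 := by
        refine Finset.sum_le_sum fun p hp => ?_
        refine (Finset.sum_le_sum fun q hq =>
          posBond_across str g hg α m p q (mem_box.1 hp).1.2 ?_).trans ?_
        · have := (mem_box.1 hq).1.1
          omega
        · rw [Finset.sum_ite_eq']
          split_ifs <;> simp
    _ = ((box a m c d).filter (fun p => p.1 = m)).card * g := by
        rw [← Finset.sum_filter, Finset.sum_const, smul_eq_mul]
    _ ≤ (d + 1 - c).toNat * g := by
        refine Nat.mul_le_mul_right g ?_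
        have hsub : (box a m c d).filter (fun p => p.1 = m) ⊆ box m m c d := by
          intro p hp
          rw [Finset.mem_filter, mem_box] at hp
          rw [mem_box]
          omega
        refine (Finset.card_le_card hsub).trans ?_
        simp [box]

/-- If `T` is a finite tile set over a glue alphabet in which
every glue has strength at most `g`, `c ≥ 1`, and `τ₁, τ₂, …` are nondecreasing
temperature functions and `k₁, k₂, …` pairwise distinct positive integers such
that each `(T, τᵢ)` has a terminal supertile and self-assembles a `kᵢ × hᵢ`
rectangle with `1 ≤ hᵢ ≤ c`, then `f(n) = infᵢ τᵢ(n)` satisfies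
`f(n) ≤ (c + 1)·g` for every `n ≥ 1` (in particular `f(n) = O(1)`). -/
theorem rectangle_temperature_bound {G : Type} (str : G → ℕ) (g : ℕ)
    (hg : ∀ a : G, str a ≤ g) (T : Set (Tile G)) (hT : T.Finite)
    (c : ℕ) (hc : 1 ≤ c)
    (τ : ℕ → ℕ → ℕ) (hτ : ∀ i, Monotone (τ i))
    (k : ℕ → ℕ) (hk : Function.Injective k) (hkpos : ∀ i, 1 ≤ k i)
    (h : ℕ → ℕ)
    (hsys : ∀ i : ℕ, 1 ≤ h i ∧ h i ≤ c ∧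
      (∃ α : Assembly G T, Terminal str T (τ i) α) ∧
      SelfAssembles str T (τ i) (rect (k i) (h i))) :
    ∀ n : ℕ, 1 ≤ n → (⨅ i : ℕ, τ i n) ≤ (c + 1) * g := by
  intro n _
  -- Distinct widths are unbounded, so some rectangle is wide enough to be halved.
  obtain ⟨i, hi⟩ : ∃ i, 2 * n ≤ k i := by
    by_contra! hcon
    exact Set.infinite_range_of_injective hk
      ((Set.finite_Iio (2 * n)).subset (by rintro _ ⟨i, rfl⟩; exact hcon i))
  refine (ciInf_le (OrderBot.bddBelow _) i).trans ?_
  obtain ⟨h1, hhc, ⟨α, hα⟩, hself⟩ := hsys i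
  obtain ⟨v, hv⟩ := hself α hα
  have hdom : ∀ p : ℤ × ℤ, p ∈ α.dom ↔ (1 + v.1 ≤ p.1 ∧ p.1 ≤ k i + v.1) ∧
      (1 + v.2 ≤ p.2 ∧ p.2 ≤ h i + v.2) := by
    intro p
    rw [← Finset.mem_coe, hv]
    constructor
    · rintro ⟨r, hr, rfl⟩
      simp only [rect, Set.mem_ofPred_eq] at hr
      simp only [Prod.fst_add, Prod.snd_add]
      omega
    · intro hp
      refine ⟨p - v, ?_, sub_add_cancel p v⟩
      simp only [rect, Set.mem_ofPred_eq, Prod.fst_sub, Prod.snd_sub]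
      omega
  have hA : box (1 + v.1) (n + v.1) (1 + v.2) (h i + v.2) ⊆ α.dom := by
    intro p hp
    rw [mem_box] at hp
    rw [hdom]
    omega
  have hB : box (n + v.1 + 1) (k i + v.1) (1 + v.2) (h i + v.2) ⊆ α.dom := by
    intro p hp
    rw [mem_box] at hp
    rw [hdom]
    omega
  by_contra! hlt
  refine hα.2.2 (α.restrict _ hA (box_connected _ _ _ _))
    (α.restrict _ hB (box_connected _ _ _ _))
    ⟨_, _, α, .refl _, .refl _, .refl _, ⟨?_, ?_, ?_, ?_⟩, ?_⟩
  · rw [Finset.disjoint_left]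
    intro p hp hq
    have hp' := mem_box.1 hp
    have hq' := mem_box.1 hq
    omega
  · ext p
    rw [Finset.mem_union, hdom]
    change _ ↔ p ∈ box _ _ _ _ ∨ p ∈ box _ _ _ _
    rw [mem_box, mem_box]
    omega
  · intro p hp
    exact (if_pos hp).symm
  · intro p hp
    exact (if_pos hp).symm
  · change cutStrength str α (box _ _ _ _) (box _ _ _ _) <
      τ i (min (box _ _ _ _).card (box _ _ _ _).card)
    have hcut := cutStrength_box_le str g hg α (1 + v.1) (n + v.1) (k i + v.1)
      (1 + v.2) (h i + v.2)
    have hheight : ((h i : ℤ) + v.2 + 1 - (1 + v.2)).toNat = h i := by omega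
    rw [hheight] at hcut
    -- Both halves have at least `n` columns and at least one row.
    have hcard : n ≤ min (box (1 + v.1) (n + v.1) (1 + v.2) (h i + v.2)).card
        (box (n + v.1 + 1) (k i + v.1) (1 + v.2) (h i + v.2)).card := by
      simp only [box, Finset.card_product, Int.card_Icc, hheight]
      refine le_min ?_ ?_
      · exact le_trans (by omega) (Nat.le_mul_of_pos_right _ h1)
      · exact le_trans (by omega) (Nat.le_mul_of_pos_right _ h1)
    calc _ ≤ h i * g := hcut
      _ ≤ (c + 1) * g := Nat.mul_le_mul_right g (by omega)
      _ < τ i n := hlt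
      _ ≤ _ := hτ i hcard
end

section
/- Let α be an assembly over a tile set in which every glue has strength at most g, suppose the domain of α is a translate of the w × h rectangle with 1 ≤ h ≤ w, and let τ be a nondecreasing temperature function. If α is τ-stable, then τ(n) ≤ (h + 1)·g for every integer n with 1 ≤ n ≤ wh/2. -/
/-- Cell number `i` in the column-by-column numbering of the height-`h` strip whose lower left
cell is `v + (1, 1)`. -/
def columnCell (v : ℤ × ℤ) (h i : ℕ) : ℤ × ℤ :=
  (v.1 + 1 + (i / h : ℕ), v.2 + 1 + (i % h : ℕ))

lemma columnCell_injective (v : ℤ × ℤ) (h : ℕ) : Function.Injective (columnCell v h) := by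
  intro i j hij
  simp only [columnCell, Prod.mk.injEq] at hij
  have h1 : i / h = j / h := by omega
  have h2 : i % h = j % h := by omega
  rw [← Nat.div_add_mod i h, ← Nat.div_add_mod j h, h1, h2]

lemma image_columnCell_range (v : ℤ × ℤ) (w h : ℕ) (hh : 1 ≤ h) (D : Finset (ℤ × ℤ))
    (hD : (↑D : Set (ℤ × ℤ)) = (· + v) '' rect w h) :
    (Finset.range (w * h)).image (columnCell v h) = D := by
  rw [← Finset.coe_inj, hD]
  ext p
  simp only [Finset.coe_image, Finset.coe_range, Set.mem_image, Set.mem_Iio, rect,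
    Set.mem_ofPred_eq]
  constructor
  · rintro ⟨i, hi, rfl⟩
    have h1 : i / h < w := Nat.div_lt_of_lt_mul (by rwa [mul_comm] at hi)
    have h2 : i % h < h := Nat.mod_lt _ hh
    have h0 : (0 : ℤ) ≤ (i / h : ℕ) := Int.natCast_nonneg _
    refine ⟨(1 + (i / h : ℕ), 1 + (i % h : ℕ)), ⟨?_, ?_, ?_, ?_⟩, ?_⟩
    · exact le_add_of_nonneg_right h0
    · dsimp only; omega
    · dsimp only; omega
    · dsimp only; omega
    · ext <;> simp only [columnCell, Prod.fst_add, Prod.snd_add] <;> ring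
  · rintro ⟨⟨a, b⟩, ⟨h1, h2, h3, h4⟩, rfl⟩
    dsimp only at h1 h2 h3 h4
    obtain ⟨x, rfl⟩ : ∃ x : ℕ, a = 1 + x := ⟨(a - 1).toNat, by omega⟩
    obtain ⟨y, rfl⟩ : ∃ y : ℕ, b = 1 + y := ⟨(b - 1).toNat, by omega⟩
    have hx : x + 1 ≤ w := by omega
    have hy : y < h := by omega
    refine ⟨y + h * x, by nlinarith, ?_⟩
    have e1 : (y + h * x) / h = x := by
      rw [Nat.add_mul_div_left _ _ hh, Nat.div_eq_of_lt hy, zero_add]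
    have e2 : (y + h * x) % h = y := by
      rw [Nat.add_mul_mod_self_left, Nat.mod_eq_of_lt hy]
    ext <;> simp only [columnCell, e1, e2, Prod.fst_add, Prod.snd_add] <;> ring

lemma glueBond_le {G : Type} (str : G → ℕ) (g : ℕ) (hg : ∀ a : G, str a ≤ g) (a b : G) :
    glueBond str a b ≤ g := by
  unfold glueBond
  split_ifs
  · exact hg a
  · exact Nat.zero_le g

/-- Going up in the numbering, only the cells `h` and `1` further can be adjacent to cell `i`. -/
lemma posBond_columnCell_le {G : Type} {T : Set (Tile G)} (str : G → ℕ) (g : ℕ)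
    (hg : ∀ a : G, str a ≤ g) (α : Assembly G T) (v : ℤ × ℤ) (h i j : ℕ) (hij : i < j) :
    posBond str α (columnCell v h i) (columnCell v h j) ≤
      (if j = i + h then g else 0) + (if j = i + 1 then g else 0) := by
  have hi := Nat.div_add_mod i h
  have hj := Nat.div_add_mod j h
  unfold posBond
  split
  · unfold tileBond
    split_ifs with c1 c2 c3 c4 c5 c6 <;>
      first
      | exact Nat.zero_le _
      | exact (glueBond_le str g hg _ _).trans (by omega)
      | (exfalso
         simp only [columnCell, Prod.mk.injEq] at *
         first
         | (have e1 : j / h = i / h + 1 := by omega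
            have e2 : j % h = i % h := by omega
            rw [e1, e2, mul_add] at hj
            omega)
         | (have e1 : i / h = j / h + 1 := by omega
            have e2 : j % h = i % h := by omega
            rw [e1, mul_add] at hi
            omega)
         | (have e1 : j / h = i / h := by omega
            rw [e1] at hj
            omega))
  · exact Nat.zero_le _

/-- At most `d` pairs of indices at distance `d` are separated by the threshold `n`. -/
lemma sum_crossing_le (n N d g : ℕ) :
    ∑ i ∈ Finset.range n, ∑ j ∈ Finset.Ico n N, (if j = i + d then g else 0) ≤ d * g := by
  calc ∑ i ∈ Finset.range n, ∑ j ∈ Finset.Ico n N, (if j = i + d then g else 0)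
      ≤ ∑ i ∈ Finset.range n, (if n ≤ i + d then g else 0) := by
        refine Finset.sum_le_sum fun i _ => ?_
        rw [Finset.sum_ite_eq']
        simp only [Finset.mem_Ico]
        split_ifs <;> omega
    _ = ((Finset.range n).filter fun i => n ≤ i + d).card * g := by
        rw [← Finset.sum_filter, Finset.sum_const, smul_eq_mul]
    _ ≤ d * g := by
        refine Nat.mul_le_mul_right g ?_
        have hsub : ((Finset.range n).filter fun i => n ≤ i + d) ⊆ Finset.Ico (n - d) n := by
          intro i hi
          simp only [Finset.mem_filter, Finset.mem_range] at hi
          simp only [Finset.mem_Ico]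
          omega
        have := Finset.card_le_card hsub
        rw [Nat.card_Ico] at this
        omega

/-- If `α` is an assembly over a tile set in which every glue has
strength at most `g`, the domain of `α` is a translate of the `w × h` rectangle
with `1 ≤ h ≤ w`, `τ` is a nondecreasing temperature function, and `α` is
`τ`-stable, then `τ(n) ≤ (h + 1)·g` for every integer `n` with
`1 ≤ n ≤ wh/2`. -/
theorem stable_rectangle_temperature_bound {G : Type} {T : Set (Tile G)}
    (str : G → ℕ) (g : ℕ) (hg : ∀ a : G, str a ≤ g)
    (α : Assembly G T) (w h : ℕ) (hh : 1 ≤ h) (hw : h ≤ w)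
    (hdom : ∃ v : ℤ × ℤ, (↑α.dom : Set (ℤ × ℤ)) = (· + v) '' rect w h)
    (τ : ℕ → ℕ) (hτ : Monotone τ) (hstable : IsStable str τ α) :
    ∀ n : ℕ, 1 ≤ n → 2 * n ≤ w * h → τ n ≤ (h + 1) * g := by
  intro n hn hn2
  obtain ⟨v, hv⟩ := hdom
  have hinj := columnCell_injective v h
  have hcut := hstable ((Finset.range n).image (columnCell v h))
    ((Finset.Ico n (w * h)).image (columnCell v h))
    (by
      rw [Finset.disjoint_image hinj, Finset.disjoint_left]
      intro i h1 h2
      simp only [Finset.mem_range, Finset.mem_Ico] at h1 h2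
      omega)
    (by
      rw [← Finset.image_union, ← image_columnCell_range v w h hh α.dom hv]
      congr 1
      ext i
      simp only [Finset.mem_union, Finset.mem_range, Finset.mem_Ico]
      omega)
    ⟨_, Finset.mem_image_of_mem _ (Finset.mem_range.2 (show 0 < n by omega))⟩
    ⟨_, Finset.mem_image_of_mem _ (Finset.mem_Ico.2 ⟨le_refl n, by omega⟩)⟩
  rw [Finset.card_image_of_injective _ hinj, Finset.card_image_of_injective _ hinj,
    Finset.card_range, Nat.card_Ico, min_eq_left (by omega)] at hcut
  refine hcut.trans ?_
  unfold cutStrength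
  rw [Finset.sum_image hinj.injOn]
  simp_rw [Finset.sum_image hinj.injOn]
  calc ∑ i ∈ Finset.range n, ∑ j ∈ Finset.Ico n (w * h),
        posBond str α (columnCell v h i) (columnCell v h j)
      ≤ ∑ i ∈ Finset.range n, ∑ j ∈ Finset.Ico n (w * h),
          ((if j = i + h then g else 0) + (if j = i + 1 then g else 0)) := by
        refine Finset.sum_le_sum fun i hi => Finset.sum_le_sum fun j hj => ?_
        rw [Finset.mem_range] at hi
        rw [Finset.mem_Ico] at hj
        exact posBond_columnCell_le str g hg α v h i j (by omega)
    _ ≤ h * g + 1 * g := by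
        simp_rw [Finset.sum_add_distrib]
        exact add_le_add (sum_crossing_le n _ h g) (sum_crossing_le n _ 1 g)
    _ = (h + 1) * g := by ring
end

section
/- For all integers w ≥ h ≥ 1 and every integer n with 1 ≤ n ≤ wh/2, there exist disjoint nonempty sets A, B ⊆ ℤ² with A ∪ B = {1,…,w} × {1,…,h}, |A| = n, such that both A and B are connected under grid adjacency and the number of pairs (p, q) with p ∈ A, q ∈ B, and p and q at distance 1 is at most h + 1. -/
instance : ∀ p q : ℤ × ℤ, Decidable (Adj p q) := fun p q =>
  inferInstanceAs (Decidable ((p.1 - q.1).natAbs + (p.2 - q.2).natAbs = 1))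

/-- A set is connected if every point other than a fixed root `r` has a neighbour in the set with
a strictly smaller value of `f`: descending along `f` leads every point to `r`. -/
lemma connectedIn_of_descent (S : Set (ℤ × ℤ)) (r : ℤ × ℤ) (f : ℤ × ℤ → ℕ)
    (hS : ∀ p ∈ S, p = r ∨ ∃ q ∈ S, Adj p q ∧ f q < f p) : ConnectedIn S := by
  have key : ∀ k : ℕ, ∀ p ∈ S, f p ≤ k →
      Relation.ReflTransGen (fun a b => Adj a b ∧ a ∈ S ∧ b ∈ S) p r := by
    intro k
    induction k with
    | zero =>
      intro p hp hk
      rcases hS p hp with rfl | ⟨q, _, _, hlt⟩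
      · exact .refl
      · omega
    | succ k ih =>
      intro p hp hk
      rcases hS p hp with rfl | ⟨q, hq, hadj, hlt⟩
      · exact .refl
      · exact .head ⟨hadj, hp, hq⟩ (ih q hq (by omega))
  have hsymm : Std.Symm (fun a b : ℤ × ℤ => Adj a b ∧ a ∈ S ∧ b ∈ S) :=
    ⟨fun a b ⟨h, ha, hb⟩ => ⟨by unfold Adj at *; omega, hb, ha⟩⟩
  intro p hp q hq
  exact (key _ p hp le_rfl).trans
    (Relation.ReflTransGen.stdSymm.symm _ _ (key _ q hq le_rfl))

/-- For all integers `w ≥ h ≥ 1` and every integer `n` with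
`1 ≤ n ≤ wh/2`, the `w × h` rectangle can be partitioned into disjoint
nonempty parts `A` and `B` with `|A| = n`, both connected under grid
adjacency, such that the number of grid-adjacent pairs `(p, q)` with `p ∈ A`
and `q ∈ B` is at most `h + 1`. -/
theorem rectangle_cut_exists (w h : ℕ) (hh : 1 ≤ h) (hw : h ≤ w)
    (n : ℕ) (hn : 1 ≤ n) (hn2 : 2 * n ≤ w * h) :
    ∃ A B : Finset (ℤ × ℤ), Disjoint A B ∧ A.Nonempty ∧ B.Nonempty ∧
      (↑(A ∪ B) : Set (ℤ × ℤ)) = rect w h ∧ A.card = n ∧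
      ConnectedIn (↑A : Set (ℤ × ℤ)) ∧ ConnectedIn (↑B : Set (ℤ × ℤ)) ∧
      ((A ×ˢ B).filter (fun pq => Adj pq.1 pq.2)).card ≤ h + 1 := by
  obtain ⟨a, b, hab, hb, ha⟩ : ∃ a b : ℕ, n = h * a + b ∧ b < h ∧ a < w :=
    ⟨n / h, n % h, (Nat.div_add_mod n h).symm, Nat.mod_lt _ hh,
      Nat.div_lt_of_lt_mul (by rw [Nat.mul_comm]; omega)⟩
  have hne : 1 ≤ a ∨ 1 ≤ b := by
    by_contra hcon
    have h1 : a = 0 := by omega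
    subst h1
    omega
  let A : Finset (ℤ × ℤ) := (Finset.Icc 1 (a : ℤ) ×ˢ Finset.Icc 1 (h : ℤ)) ∪
    ({(a : ℤ) + 1} ×ˢ Finset.Icc 1 (b : ℤ))
  let B : Finset (ℤ × ℤ) := (Finset.Icc 1 (w : ℤ) ×ˢ Finset.Icc 1 (h : ℤ)) \ A
  have memA : ∀ x y : ℤ, (x, y) ∈ A ↔
      (1 ≤ x ∧ x ≤ a ∧ 1 ≤ y ∧ y ≤ h) ∨ (x = a + 1 ∧ 1 ≤ y ∧ y ≤ b) := by
    intro x y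
    simp only [A, Finset.mem_union, Finset.mem_product, Finset.mem_Icc, Finset.mem_singleton]
    tauto
  have memB : ∀ x y : ℤ, (x, y) ∈ B ↔
      (1 ≤ x ∧ x ≤ w ∧ 1 ≤ y ∧ y ≤ h) ∧ a + 1 ≤ x ∧ (x = a + 1 → b + 1 ≤ y) := by
    intro x y
    simp only [B, Finset.mem_sdiff, memA, Finset.mem_product, Finset.mem_Icc]
    omega
  refine ⟨A, B, Finset.disjoint_sdiff, ⟨(1, 1), ?_⟩, ⟨(w, h), ?_⟩, ?_, ?_, ?_, ?_, ?_⟩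
  · rw [memA]; omega
  · rw [memB]; omega
  · ext ⟨x, y⟩
    simp only [rect, Finset.mem_coe, Finset.mem_union, memA, memB, Set.mem_ofPred_eq]
    omega
  · rw [Finset.card_union_of_disjoint]
    · simp [hab, Nat.mul_comm]
    · rw [Finset.disjoint_left]
      rintro ⟨x, y⟩ h1 h2
      simp only [Finset.mem_product, Finset.mem_Icc, Finset.mem_singleton] at h1 h2
      omega
  · apply connectedIn_of_descent _ (1, 1) (fun p => (p.1 + p.2).toNat)
    rintro ⟨x, y⟩ hp
    simp only [Finset.mem_coe, memA] at hp
    by_cases hx : x = 1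
    · by_cases hy : y = 1
      · left; rw [hx, hy]
      · right
        refine ⟨(x, y - 1), ?_, ?_, ?_⟩
        · simp only [Finset.mem_coe, memA]; omega
        · simp only [Adj]; omega
        · dsimp only; omega
    · right
      refine ⟨(x - 1, y), ?_, ?_, ?_⟩
      · simp only [Finset.mem_coe, memA]; omega
      · simp only [Adj]; omega
      · dsimp only; omega
  · apply connectedIn_of_descent _ ((w : ℤ), (h : ℤ)) (fun p => (w + h - p.1 - p.2).toNat)
    rintro ⟨x, y⟩ hp
    simp only [Finset.mem_coe, memB] at hp
    by_cases hx : x = w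
    · by_cases hy : y = h
      · left; rw [hx, hy]
      · right
        refine ⟨(x, y + 1), ?_, ?_, ?_⟩
        · simp only [Finset.mem_coe, memB]; omega
        · simp only [Adj]; omega
        · dsimp only; omega
    · right
      refine ⟨(x + 1, y), ?_, ?_, ?_⟩
      · simp only [Finset.mem_coe, memB]; omega
      · simp only [Adj]; omega
      · dsimp only; omega
  -- A horizontal pair is labelled by its row, a vertical one by `0` (rows start at `1`).
  · have hcard : (Finset.Icc (0 : ℤ) h).card = h + 1 := by simp
    rw [← hcard]
    apply Finset.card_le_card_of_injOn
      (fun pq : (ℤ × ℤ) × (ℤ × ℤ) => if pq.1.2 = pq.2.2 then pq.1.2 else 0)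
    · rintro ⟨⟨x, y⟩, ⟨x', y'⟩⟩ hp
      simp only [Finset.mem_coe, Finset.mem_filter, Finset.mem_product, memA, memB] at hp
      simp only [Adj] at hp
      simp only [Finset.coe_Icc, Set.mem_Icc]
      split_ifs <;> omega
    · rintro ⟨⟨x, y⟩, ⟨x', y'⟩⟩ hp ⟨⟨u, v⟩, ⟨u', v'⟩⟩ hq heq
      simp only [Finset.mem_coe, Finset.mem_filter, Finset.mem_product, memA, memB] at hp hq
      simp only [Adj] at hp hq
      simp only at heq
      simp only [Prod.mk.injEq]
      split_ifs at heq <;> omega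
end
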